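/- Let A be a real symmetric 5×5 matrix and J = diag(1,1,1,1,−1). Then there exist at most three real numbers t such that det(A − tJ) = 0 and the symmetric matrix A − tJ has exactly two positive and exactly two negative eigenvalues (counted with multiplicity). (Hence a Darboux cyclide carries at most three paired families of circles.) -/

import Mathlib

open Matrix

/-- The matrix `J = diag(1,1,1,1,−1)`. -/
noncomputable def Jmat : Matrix (Fin 5) (Fin 5) ℝ :=
  Matrix.diagonal ![1, 1, 1, 1, -1]

lemma Jmat_isHermitian : Jmat.IsHermitian := Matrix.isHermitian_diagonal _

lemma smul_Jmat_isHermitian (t : ℝ) : (t • Jmat).IsHermitian := by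
  rw [Matrix.IsHermitian, Matrix.conjTranspose_smul, star_trivial]
  rw [Jmat_isHermitian]

/-- The matrices `A − tJ` of the pencil are Hermitian (i.e. real symmetric). -/
noncomputable def pencilHerm (A : Matrix (Fin 5) (Fin 5) ℝ) (hA : A.IsHermitian) (t : ℝ) :
    (A - t • Jmat).IsHermitian :=
  hA.sub (smul_Jmat_isHermitian t)

/-- The number of positive eigenvalues (with multiplicity) of a real symmetric matrix. -/
noncomputable def posCount {M : Matrix (Fin 5) (Fin 5) ℝ} (hM : M.IsHermitian) : ℕ :=
  (Finset.univ.filter fun i => 0 < hM.eigenvalues i).card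

/-- The number of negative eigenvalues (with multiplicity) of a real symmetric matrix. -/
noncomputable def negCount {M : Matrix (Fin 5) (Fin 5) ℝ} (hM : M.IsHermitian) : ℕ :=
  (Finset.univ.filter fun i => hM.eigenvalues i < 0).card

/-!
Call the vectors of the radical of `Q - t • J` the null vectors at `t`. Null vectors at different
parameters are `J`-orthogonal. As `J` is nondegenerate with at most one negative square, two
independent orthogonal vectors cannot both satisfy `J v ≤ 0`, so at most one parameter has a nonzero
null vector with `J v ≤ 0`.

Now let `r < s < t`, with null vectors at `s` and `t` on which `J` is positive. Extend their span to
a maximal `J`-positive definite subspace `H`, of codimension at most one. Adding a positive definite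
form to a singular one raises the positive index, so on `H` this index drops strictly between `r`
and `s` and again between `s` and `t`. Passing from `H` to the whole space gains at most one, so the
positive indices at `r` and `t` differ: three parameters with positive null vectors never share one
positive index, and at most `2 + 1` singular parameters do.
-/

open QuadraticMap Module

section Radical

variable {R M : Type*} [CommRing R] [AddCommGroup M] [Module R M]

lemma polar_eq_zero_of_mem_radical {Q : QuadraticForm R M} {v : M} (hv : v ∈ Q.radical) (x : M) :
    polar Q v x = 0 :=
  LinearMap.congr_fun (radical_le_ker_polarBilin hv) x

lemma radical_restrict_ne_bot {Q : QuadraticForm R M} {H : Submodule R M} {v : M}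
    (hv : v ∈ Q.radical) (hv0 : v ≠ 0) (hvH : v ∈ H) : (Q.restrict H).radical ≠ ⊥ := by
  refine (Submodule.ne_bot_iff _).2 ⟨⟨v, hvH⟩, ?_, by simpa using hv0⟩
  rw [mem_radical_iff'] at hv ⊢
  exact ⟨hv.1, fun x ↦ hv.2 x⟩

variable [IsDomain R] {Q J : QuadraticForm R M} {s t : R}

lemma isOrtho_of_mem_radical_sub_smul (hst : s ≠ t) {u v : M} (hu : u ∈ (Q - s • J).radical)
    (hv : v ∈ (Q - t • J).radical) : J.IsOrtho u v := by
  have hpolar (a : R) : polar (Q - a • J) u v = polar Q u v - a * polar J u v := by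
    simp only [polar, _root_.sub_apply, _root_.smul_apply, smul_eq_mul]
    ring
  have hu' := (hpolar s).symm.trans (polar_eq_zero_of_mem_radical hu v)
  have hv' := (hpolar t).symm.trans
    ((polar_comm _ u v).trans (polar_eq_zero_of_mem_radical hv u))
  rw [← isOrtho_polarBilin, polarBilin_apply_apply]
  refine (mul_eq_zero.1 (?_ : (t - s) * polar J u v = 0)).resolve_left (sub_ne_zero.2 hst.symm)
  linear_combination hu' - hv'

lemma disjoint_radical_sub_smul (hJ : J.radical = ⊥) (hst : s ≠ t) :
    Disjoint (Q - s • J).radical (Q - t • J).radical := by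
  rw [Submodule.disjoint_def]
  intro v hs ht
  rw [mem_radical_iff'] at hs ht
  simp only [_root_.sub_apply, _root_.smul_apply, smul_eq_mul] at hs ht
  rw [← Submodule.mem_bot R, ← hJ, mem_radical_iff']
  have hts : t - s ≠ 0 := sub_ne_zero.2 hst.symm
  refine ⟨mul_left_cancel₀ hts ?_, fun x ↦ mul_left_cancel₀ hts ?_⟩
  · linear_combination hs.1 - ht.1
  · linear_combination hs.2 x - ht.2 x

end Radical

section Signature

variable {𝕜 V : Type*} [Field 𝕜] [LinearOrder 𝕜] [AddCommGroup V] [Module 𝕜 V]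

lemma sigPos_restrict_le [FiniteDimensional 𝕜 V] (Q : QuadraticForm 𝕜 V) (H : Submodule 𝕜 V) :
    sigPos (Q.restrict H) ≤ sigPos Q := by
  obtain ⟨P, hfin, hP⟩ := exists_finrank_eq_sigPos_and_posDef (Q.restrict H)
  rw [← hfin, ← Submodule.finrank_map_subtype_eq]
  refine le_sigPos_of_posDef Q ?_
  rintro ⟨_, x, hx, rfl⟩ hx0
  exact hP ⟨x, hx⟩ (by simpa using hx0)

lemma sigPos_add_finrank_le_sigPos_restrict_add_finrank [FiniteDimensional 𝕜 V]
    (Q : QuadraticForm 𝕜 V) (H : Submodule 𝕜 V) :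
    sigPos Q + finrank 𝕜 H ≤ sigPos (Q.restrict H) + finrank 𝕜 V := by
  obtain ⟨P, hfin, hP⟩ := exists_finrank_eq_sigPos_and_posDef Q
  have hPH : ((Q.restrict H).restrict (P.comap H.subtype)).PosDef := fun x hx ↦
    hP ⟨x, x.2⟩ fun h ↦ hx (Subtype.ext (Subtype.ext (congrArg (P.subtype ·) h)))
  have hle := le_sigPos_of_posDef _ hPH
  rw [← Submodule.finrank_map_subtype_eq, Submodule.map_comap_subtype] at hle
  have := Submodule.finrank_sup_add_finrank_inf_eq H P
  have := (H ⊔ P).finrank_le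
  omega

variable [IsStrictOrderedRing 𝕜]

lemma posDef_restrict_sup_span {Q : QuadraticForm 𝕜 V} {W : Submodule 𝕜 V}
    (hW : (Q.restrict W).PosDef) {x : V} (hx : 0 < Q x) (hWx : ∀ y ∈ W, Q.IsOrtho y x) :
    (Q.restrict (W ⊔ Submodule.span 𝕜 {x})).PosDef := by
  rintro ⟨z, hz⟩ hz0
  obtain ⟨y, hy, _, hcx, rfl⟩ := Submodule.mem_sup.1 hz
  obtain ⟨c, rfl⟩ := Submodule.mem_span_singleton.1 hcx
  have hQ : Q (y + c • x) = Q y + c * c * Q x := by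
    simp [QuadraticMap.map_add Q, QuadraticMap.map_smul, (hWx y hy).polar_eq_zero]
  rw [restrict_apply, hQ]
  rcases eq_or_ne c 0 with rfl | hc
  · simpa using hW ⟨y, hy⟩ (by simpa using hz0)
  · exact add_pos_of_nonneg_of_pos (hW.nonneg ⟨y, hy⟩) (mul_pos (mul_self_pos.2 hc) hx)

lemma exists_posDef_restrict_of_isOrtho {Q : QuadraticForm 𝕜 V} {v w : V} (hv : 0 < Q v)
    (hw : 0 < Q w) (hvw : Q.IsOrtho v w) :
    ∃ W : Submodule 𝕜 V, v ∈ W ∧ w ∈ W ∧ (Q.restrict W).PosDef := by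
  have hbot : (Q.restrict ⊥).PosDef := fun x hx ↦ (hx (Subsingleton.elim x 0)).elim
  have hspan := posDef_restrict_sup_span hbot hv (by simp +contextual [IsOrtho.zero_left])
  have hpair := posDef_restrict_sup_span hspan hw (by
    simp [Submodule.mem_span_singleton, ← isOrtho_polarBilin, hvw.polar_eq_zero])
  refine ⟨_, ?_, ?_, hpair⟩
  · exact Submodule.mem_sup_left (Submodule.mem_sup_right (Submodule.mem_span_singleton_self v))
  · exact Submodule.mem_sup_right (Submodule.mem_span_singleton_self w)

variable [FiniteDimensional 𝕜 V]

lemma exists_le_posDef_restrict_finrank_eq_sigPos {Q : QuadraticForm 𝕜 V} {W : Submodule 𝕜 V}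
    (hW : (Q.restrict W).PosDef) :
    ∃ H, W ≤ H ∧ (Q.restrict H).PosDef ∧ finrank 𝕜 H = sigPos Q := by
  obtain ⟨H, ⟨hWH, hH⟩, hmax⟩ := wellFounded_gt.has_min
    {H : Submodule 𝕜 V | W ≤ H ∧ (Q.restrict H).PosDef} ⟨W, le_rfl, hW⟩
  refine ⟨H, hWH, hH, (le_sigPos_of_posDef Q hH).antisymm ?_⟩
  have hortho_nonpos : ∀ x ∈ LinearMap.BilinForm.orthogonal Q.polarBilin H, Q x ≤ 0 := by
    intro x hx
    by_contra! hpos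
    have hHx : ∀ y ∈ H, Q.IsOrtho y x := fun y hy ↦ isOrtho_polarBilin.1 (hx y hy)
    refine hmax _ ⟨hWH.trans le_sup_left, posDef_restrict_sup_span hH hpos hHx⟩ ?_
    refine left_lt_sup.2 fun hle ↦ ?_
    have hxH : x ∈ H := hle (Submodule.mem_span_singleton_self x)
    have := (hHx x hxH).polar_eq_zero
    rw [polar_self, two_nsmul] at this
    linarith
  have hle := QuadraticForm.sigPos_add_finrank_le_of_nonpos hortho_nonpos
  have hrefl : LinearMap.BilinForm.IsRefl Q.polarBilin := fun x y h ↦ by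
    rwa [polarBilin_apply_apply, polar_comm] at h
  have hadd := LinearMap.BilinForm.finrank_add_finrank_orthogonal hrefl H
  omega

lemma sigPos_lt_sigPos_add_of_posDef {Q R : QuadraticForm 𝕜 V} (hQ : Q.radical ≠ ⊥)
    (hR : R.PosDef) : sigPos Q < sigPos (Q + R) := by
  obtain ⟨v, hv, hv0⟩ := (Submodule.ne_bot_iff _).1 hQ
  obtain ⟨P, hfin, hP⟩ := exists_finrank_eq_sigPos_and_posDef Q
  have hvP : v ∉ P := fun h ↦
    (hP ⟨v, h⟩ (by simpa using hv0)).ne' (mem_radical_iff'.1 hv).1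
  have hpos : ((Q + R).restrict (P ⊔ Submodule.span 𝕜 {v})).PosDef := by
    rintro ⟨z, hz⟩ hz0
    obtain ⟨y, hy, w, hw, rfl⟩ := Submodule.mem_sup.1 hz
    have hw' : w ∈ Q.radical := (Submodule.span_singleton_le_iff_mem v _).2 hv hw
    have hQ : 0 ≤ Q (y + w) := by
      rw [add_comm, (mem_radical_iff'.1 hw').2]
      exact hP.nonneg ⟨y, hy⟩
    exact add_pos_of_nonneg_of_pos hQ (hR _ (by simpa using hz0))
  calc sigPos Q = finrank 𝕜 P := hfin.symm
    _ < finrank 𝕜 ↥(P ⊔ Submodule.span 𝕜 {v}) := Submodule.finrank_lt_finrank_of_lt <|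
      left_lt_sup.2 fun hle ↦ hvP (hle (Submodule.mem_span_singleton_self v))
    _ ≤ sigPos (Q + R) := le_sigPos_of_posDef _ hpos

lemma sigPos_restrict_sub_smul_lt {Q J : QuadraticForm 𝕜 V} {H : Submodule 𝕜 V}
    (hH : (J.restrict H).PosDef) {s t : 𝕜} (hst : s < t) {v : V}
    (hv : v ∈ (Q - t • J).radical) (hv0 : v ≠ 0) (hvH : v ∈ H) :
    sigPos ((Q - t • J).restrict H) < sigPos ((Q - s • J).restrict H) := by
  have hadd : (Q - s • J).restrict H = (Q - t • J).restrict H + (t - s) • J.restrict H := by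
    ext x
    simp only [restrict_apply, _root_.add_apply, _root_.sub_apply,
      _root_.smul_apply, smul_eq_mul]
    ring
  rw [hadd]
  exact sigPos_lt_sigPos_add_of_posDef (radical_restrict_ne_bot hv hv0 hvH)
    (hH.smul (sub_pos.2 hst))

lemma sigPos_add_two_le_of_isOrtho {Q : QuadraticForm 𝕜 V} {u v : V}
    (huv : LinearIndependent 𝕜 ![u, v]) (hortho : Q.IsOrtho u v) (hu : Q u ≤ 0) (hv : Q v ≤ 0) :
    sigPos Q + 2 ≤ finrank 𝕜 V := by
  have hspan : ∀ x ∈ Submodule.span 𝕜 (Set.range ![u, v]), Q x ≤ 0 := by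
    intro x hx
    rw [Matrix.range_cons_cons_empty] at hx
    obtain ⟨a, b, rfl⟩ := Submodule.mem_span_pair.1 hx
    have hQ : Q (a • u + b • v) = a * a * Q u + b * b * Q v := by
      simp [QuadraticMap.map_add Q, QuadraticMap.map_smul, hortho.polar_eq_zero]
    rw [hQ]
    exact add_nonpos (mul_nonpos_of_nonneg_of_nonpos (mul_self_nonneg a) hu)
      (mul_nonpos_of_nonneg_of_nonpos (mul_self_nonneg b) hv)
  simpa [finrank_span_eq_card huv] using QuadraticForm.sigPos_add_finrank_le_of_nonpos hspan

end Signature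

lemma encard_le_two_of_forall_lt_imp_not_lt {α : Type*} [LinearOrder α] {S : Set α}
    (hS : ∀ r ∈ S, ∀ s ∈ S, ∀ t ∈ S, r < s → ¬ s < t) : S.encard ≤ 2 := by
  by_contra! hcard
  obtain ⟨T, hTS, hT⟩ := Set.exists_subset_encard_eq (Order.add_one_le_of_lt hcard)
  have hTfin : T.Finite := Set.finite_of_encard_eq_coe (k := 3) hT
  lift T to Finset α using hTfin
  have hT3 : T.card = 3 := by
    rw [Set.encard_coe_eq_coe_finsetCard] at hT
    exact_mod_cast hT
  let f := T.orderEmbOfFin hT3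
  have hf (i : Fin 3) : f i ∈ S := hTS (T.orderEmbOfFin_mem hT3 i)
  exact hS _ (hf 0) _ (hf 1) _ (hf 2) (f.strictMono (by decide)) (f.strictMono (by decide))

section Pencil

variable {𝕜 V : Type*} [Field 𝕜] [LinearOrder 𝕜] [AddCommGroup V] [Module 𝕜 V]

/-- The parameters `t` of the pencil `Q - t • J` at which some null vector is spacelike, that is,
`J` is positive on it. -/
def spacelikeParameters (Q J : QuadraticForm 𝕜 V) : Set 𝕜 :=
  {t | ∃ v ∈ (Q - t • J).radical, 0 < J v}

/-- The parameters `t` of the pencil `Q - t • J` at which some nonzero null vector is causal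
(timelike or lightlike), that is, `J` is nonpositive on it. -/
def causalParameters (Q J : QuadraticForm 𝕜 V) : Set 𝕜 :=
  {t | ∃ v ∈ (Q - t • J).radical, v ≠ 0 ∧ J v ≤ 0}

lemma mem_spacelikeParameters_union_causalParameters {Q J : QuadraticForm 𝕜 V} {t : 𝕜}
    (ht : (Q - t • J).radical ≠ ⊥) : t ∈ spacelikeParameters Q J ∪ causalParameters Q J := by
  obtain ⟨v, hv, hv0⟩ := (Submodule.ne_bot_iff _).1 ht
  rcases lt_or_ge 0 (J v) with hpos | hnonpos
  · exact Or.inl ⟨v, hv, hpos⟩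
  · exact Or.inr ⟨v, hv, hv0, hnonpos⟩

variable [IsStrictOrderedRing 𝕜] [FiniteDimensional 𝕜 V] {Q J : QuadraticForm 𝕜 V}

lemma sigPos_lt_of_mem_spacelikeParameters (hJ : finrank 𝕜 V ≤ sigPos J + 1) {r s t : 𝕜}
    (hrs : r < s) (hst : s < t) (hs : s ∈ spacelikeParameters Q J)
    (ht : t ∈ spacelikeParameters Q J) : sigPos (Q - t • J) < sigPos (Q - r • J) := by
  obtain ⟨v, hv, hv_pos⟩ := hs
  obtain ⟨w, hw, hw_pos⟩ := ht
  have hv0 : v ≠ 0 := by rintro rfl; simp at hv_pos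
  have hw0 : w ≠ 0 := by rintro rfl; simp at hw_pos
  obtain ⟨W, hvW, hwW, hW⟩ := exists_posDef_restrict_of_isOrtho hv_pos hw_pos
    (isOrtho_of_mem_radical_sub_smul hst.ne hv hw)
  obtain ⟨H, hWH, hH, hfin⟩ := exists_le_posDef_restrict_finrank_eq_sigPos hW
  have hdrop_rs := sigPos_restrict_sub_smul_lt hH hrs hv hv0 (hWH hvW)
  have hdrop_st := sigPos_restrict_sub_smul_lt hH hst hw hw0 (hWH hwW)
  have hle_r := sigPos_restrict_le (Q - r • J) H
  have hle_t := sigPos_add_finrank_le_sigPos_restrict_add_finrank (Q - t • J) H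
  omega

lemma encard_spacelikeParameters_inter_le_two (hJ : finrank 𝕜 V ≤ sigPos J + 1) (p : ℕ) :
    (spacelikeParameters Q J ∩ {t | sigPos (Q - t • J) = p}).encard ≤ 2 := by
  refine encard_le_two_of_forall_lt_imp_not_lt ?_
  rintro r ⟨-, hr⟩ s ⟨hs, -⟩ t ⟨ht, htp⟩ hrs hst
  exact (sigPos_lt_of_mem_spacelikeParameters hJ hrs hst hs ht).ne (htp.trans hr.symm)

lemma encard_causalParameters_le_one (hJ : J.radical = ⊥) (hsig : finrank 𝕜 V ≤ sigPos J + 1) :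
    (causalParameters Q J).encard ≤ 1 := by
  refine Set.encard_le_one_iff.2 ?_
  rintro s t ⟨u, hu, hu0, hu_nonpos⟩ ⟨v, hv, hv0, hv_nonpos⟩
  by_contra hst
  have hindep : LinearIndependent 𝕜 ![u, v] := by
    refine (LinearIndependent.pair_iff' hu0).2 ?_
    rintro a rfl
    exact hv0 (Submodule.disjoint_def.1 (disjoint_radical_sub_smul hJ hst) _
      (Submodule.smul_mem _ a hu) hv)
  have := sigPos_add_two_le_of_isOrtho hindep (isOrtho_of_mem_radical_sub_smul hst hu hv)
    hu_nonpos hv_nonpos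
  omega

theorem at_most_three_paired_families_general (Q : QuadraticForm 𝕜 V) (hJ : J.radical = ⊥)
    (hneg : sigNeg J ≤ 1) (p : ℕ) :
    {t : 𝕜 | (Q - t • J).radical ≠ ⊥ ∧ sigPos (Q - t • J) = p}.encard ≤ 3 := by
  have hsig : finrank 𝕜 V ≤ sigPos J + 1 := by
    have := QuadraticForm.sigPos_add_sigNeg_add_radical (Q := J)
    rw [hJ, finrank_bot] at this
    omega
  let S := spacelikeParameters Q J ∩ {t | sigPos (Q - t • J) = p}
  have hsub : {t : 𝕜 | (Q - t • J).radical ≠ ⊥ ∧ sigPos (Q - t • J) = p} ⊆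
      S ∪ causalParameters Q J := fun t ht ↦
    (mem_spacelikeParameters_union_causalParameters ht.1).imp_left (⟨·, ht.2⟩)
  calc _ ≤ (S ∪ causalParameters Q J).encard := Set.encard_le_encard hsub
    _ ≤ S.encard + (causalParameters Q J).encard := Set.encard_union_le _ _
    _ ≤ 2 + 1 := add_le_add (encard_spacelikeParameters_inter_le_two hsig p)
        (encard_causalParameters_le_one hJ hsig)
    _ = 3 := by norm_num

end Pencil

section MatrixForms

variable {n : Type*} [Fintype n] [DecidableEq n]

lemma toQuadraticForm'_apply {R : Type*} [CommRing R] (M : Matrix n n R) (x : n → R) :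
    M.toQuadraticForm' x = x ⬝ᵥ M *ᵥ x := by
  simp [Matrix.toQuadraticForm', Matrix.toLinearMap₂'_apply']

lemma toQuadraticForm'_sub_smul {R : Type*} [CommRing R] (A J : Matrix n n R) (t : R) :
    (A - t • J).toQuadraticForm' = A.toQuadraticForm' - t • J.toQuadraticForm' := by
  ext x
  simp [toQuadraticForm'_apply, Matrix.sub_mulVec, Matrix.smul_mulVec, dotProduct_sub]

lemma toQuadraticForm'_diagonal {R : Type*} [CommRing R] (w : n → R) :
    (Matrix.diagonal w).toQuadraticForm' = weightedSumSquares R w := by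
  ext x
  simp only [toQuadraticForm'_apply, dotProduct, Matrix.mulVec_diagonal,
    weightedSumSquares_apply, smul_eq_mul]
  exact Finset.sum_congr rfl fun i _ ↦ mul_left_comm _ _ _

lemma radical_toQuadraticForm'_ne_bot {R : Type*} [CommRing R] [IsDomain R] {M : Matrix n n R}
    (hM : M.IsSymm) (hdet : M.det = 0) : M.toQuadraticForm'.radical ≠ ⊥ := by
  obtain ⟨v, hv0, hv⟩ := Matrix.exists_mulVec_eq_zero_iff.2 hdet
  have hv' : v ᵥ* M = 0 := by rw [← hM.eq, Matrix.vecMul_transpose, hv]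
  refine (Submodule.ne_bot_iff _).2 ⟨v, mem_radical_iff'.2 ⟨?_, fun x ↦ ?_⟩, hv0⟩
  · rw [toQuadraticForm'_apply, hv, dotProduct_zero]
  · simp only [toQuadraticForm'_apply, Matrix.mulVec_add, hv, zero_add, add_dotProduct,
      Matrix.dotProduct_mulVec v, hv', zero_dotProduct]

lemma equivalent_toQuadraticForm'_weightedSumSquares {M : Matrix n n ℝ} (hM : M.IsHermitian) :
    M.toQuadraticForm'.Equivalent (weightedSumSquares ℝ hM.eigenvalues) := by
  let U := hM.eigenvectorUnitary
  have hdiag : (U : Matrix n n ℝ)ᵀ * M * U = Matrix.diagonal hM.eigenvalues := by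
    simpa [Unitary.conjStarAlgAut_star_apply, Matrix.star_eq_conjTranspose, Function.comp_def]
      using hM.conjStarAlgAut_star_eigenvectorUnitary
  refine Equivalent.symm ⟨{ Matrix.UnitaryGroup.toLinearEquiv U with map_app' := fun x ↦ ?_ }⟩
  change M.toQuadraticForm' ((U : Matrix n n ℝ) *ᵥ x) = _
  rw [← toQuadraticForm'_diagonal, ← hdiag, toQuadraticForm'_apply, toQuadraticForm'_apply,
    ← Matrix.mulVec_mulVec, ← Matrix.mulVec_mulVec, Matrix.mulVec_transpose,
    dotProduct_comm x, ← Matrix.dotProduct_mulVec, dotProduct_comm]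

lemma sigPos_toQuadraticForm' {M : Matrix n n ℝ} (hM : M.IsHermitian) :
    sigPos M.toQuadraticForm' = {i | 0 < hM.eigenvalues i}.ncard :=
  QuadraticForm.sigPos_of_equiv_weightedSumSquares
    (equivalent_toQuadraticForm'_weightedSumSquares hM)

end MatrixForms

lemma radical_toQuadraticForm'_Jmat : Jmat.toQuadraticForm'.radical = ⊥ := by
  rw [Jmat, toQuadraticForm'_diagonal,
    QuadraticForm.radical_weightedSumSquares, Submodule.eq_bot_iff]
  intro v hv
  ext i
  refine Pi.mem_spanSubset_iff.1 hv i ?_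
  fin_cases i <;> simp

lemma sigNeg_toQuadraticForm'_Jmat : sigNeg Jmat.toQuadraticForm' = 1 := by
  rw [Jmat, toQuadraticForm'_diagonal, QuadraticForm.sigNeg_weightedSumSquares,
    Set.ncard_eq_one]
  refine ⟨4, ?_⟩
  ext i
  fin_cases i <;> simp [Fin.ext_iff]

lemma posCount_eq_sigPos {M : Matrix (Fin 5) (Fin 5) ℝ} (hM : M.IsHermitian) :
    posCount hM = sigPos M.toQuadraticForm' := by
  rw [sigPos_toQuadraticForm' hM, posCount, ← Set.ncard_coe_finset, Finset.coe_filter_univ]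

/-- there are at most three real parameters `t` for which `A − tJ` is singular
with exactly two positive and two negative eigenvalues (hence a Darboux cyclide carries at
most three paired families of circles). -/
theorem at_most_three_paired_families
    (A : Matrix (Fin 5) (Fin 5) ℝ) (hA : A.IsHermitian) :
    {t : ℝ | (A - t • Jmat).det = 0 ∧
        posCount (pencilHerm A hA t) = 2 ∧
        negCount (pencilHerm A hA t) = 2}.encard ≤ 3 := by
  refine (Set.encard_le_encard ?_).trans
    (at_most_three_paired_families_general A.toQuadraticForm' radical_toQuadraticForm'_Jmat
      sigNeg_toQuadraticForm'_Jmat.le 2)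
  rintro t ⟨hdet, hpos, -⟩
  rw [Set.mem_ofPred_eq, ← toQuadraticForm'_sub_smul, ← posCount_eq_sigPos (pencilHerm A hA t)]
  exact ⟨radical_toQuadraticForm'_ne_bot (isHermitian_iff_isSymm.1 (pencilHerm A hA t)) hdet, hpos⟩
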